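/- (Two-sided Krohn–Rhodes theorem) Let S be a finite semigroup, and let V_S be the smallest class C of finite semigroups such that: (a) every finite semilattice belongs to C; (b) every finite simple group that divides S belongs to C; (c) if U divides V and V ∈ C, then U ∈ C; (d) if U, V ∈ C, then U × V ∈ C; (e) if U, V ∈ C and W is a two-sided semidirect product U ⋈ V for some admissible pair of actions, then W ∈ C. Then S ∈ V_S. -/

import Mathlib

open Pointwise

/-- A semigroup `S` *divides* a semigroup `T` if `S` is a homomorphic image of a
subsemigroup of `T`. -/
def Divides (S : Type) [Mul S] (T : Type) [Mul T] : Prop :=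
  ∃ (U : Subsemigroup T) (f : U →ₙ* S), Function.Surjective f

/-- A semilattice: a commutative semigroup in which every element is idempotent. -/
def IsSemilattice (S : Type) [Mul S] : Prop :=
  (∀ a b : S, a * b = b * a) ∧ ∀ a : S, a * a = a

/-- The data of a two-sided semidirect product `S ⋈ T`: a left action and a right
action of `T` on `S` satisfying the usual axioms. -/
structure BowtieData (S T : Type) [Semigroup S] [Semigroup T] where
  lact : T → S → S
  ract : S → T → S
  lact_mul : ∀ t s s', lact t (s * s') = lact t s * lact t s'
  mul_ract : ∀ s s' t, ract (s * s') t = ract s t * ract s' t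
  mul_lact : ∀ t t' s, lact (t * t') s = lact t (lact t' s)
  ract_mul : ∀ s t t', ract s (t * t') = ract (ract s t) t'
  lact_ract : ∀ t s t', ract (lact t s) t' = lact t (ract s t')

/-- The underlying set of the two-sided semidirect product `S ⋈ T`. -/
structure Bowtie {S T : Type} [Semigroup S] [Semigroup T] (d : BowtieData S T) where
  fst : S
  snd : T

instance {S T : Type} [Semigroup S] [Semigroup T] (d : BowtieData S T) :
    Mul (Bowtie d) :=
  ⟨fun a b => ⟨d.ract a.fst b.snd * d.lact a.snd b.fst, a.snd * b.snd⟩⟩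

theorem Bowtie.mul_def {S T : Type} [Semigroup S] [Semigroup T] {d : BowtieData S T}
    (a b : Bowtie d) :
    a * b = ⟨d.ract a.fst b.snd * d.lact a.snd b.fst, a.snd * b.snd⟩ := rfl

/-- The two-sided semidirect product is a semigroup. -/
instance {S T : Type} [Semigroup S] [Semigroup T] (d : BowtieData S T) :
    Semigroup (Bowtie d) where
  mul_assoc a b c := by
    simp only [Bowtie.mul_def, Bowtie.mk.injEq]
    exact ⟨by simp only [d.mul_ract, d.mul_lact, d.ract_mul, d.lact_mul, d.lact_ract,
      mul_assoc], mul_assoc _ _ _⟩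

instance {S T : Type} [Semigroup S] [Semigroup T] [Finite S] [Finite T]
    (d : BowtieData S T) : Finite (Bowtie d) :=
  Finite.of_surjective (fun p : S × T => Bowtie.mk p.1 p.2) fun b => ⟨(b.fst, b.snd), rfl⟩
/-- A bundled finite semigroup. -/
structure FinSgr where
  carrier : Type
  str : Semigroup carrier
  fin : Finite carrier

attribute [instance] FinSgr.str FinSgr.fin

/-- The classes `SL^k` of finite semigroups: `SL^1` is the class of finite semilattices,
and `SL^(k+1)` is the class of finite semigroups dividing some two-sided semidirect
product `A ⋈ B` with `A` a finite semilattice and `B ∈ SL^k`.  (`SL^0` is empty.) -/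
def SL : ℕ → FinSgr → Prop
  | 0, _ => False
  | 1, T => IsSemilattice T.carrier
  | (k+2), T =>
      ∃ (A B : FinSgr) (d : BowtieData A.carrier B.carrier),
        IsSemilattice A.carrier ∧ SL (k+1) B ∧ Divides T.carrier (Bowtie d)

/-- Membership of a finite semigroup in the class `SL^k`. -/
def MemSL (k : ℕ) (S : Type) [Semigroup S] [Finite S] : Prop :=
  SL k ⟨S, inferInstance, inferInstance⟩

/-- `KRClass S` is the smallest class of finite semigroups containing all finite
semilattices and all finite simple groups dividing `S`, and closed under division,
finite direct products, and two-sided semidirect products. -/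
inductive KRClass (S : Type) [Semigroup S] [Finite S] : FinSgr → Prop
  | semilattice (T : FinSgr) : IsSemilattice T.carrier → KRClass S T
  | simpleGroup (G : Type) [Group G] [Finite G] :
      IsSimpleGroup G → Divides G S → KRClass S ⟨G, inferInstance, inferInstance⟩
  | of_divides (U V : FinSgr) : Divides U.carrier V.carrier → KRClass S V → KRClass S U
  | prod (U V : FinSgr) : KRClass S U → KRClass S V →
      KRClass S ⟨U.carrier × V.carrier, inferInstance, inferInstance⟩
  | bowtie (U V : FinSgr) (d : BowtieData U.carrier V.carrier) :
      KRClass S U → KRClass S V →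
      KRClass S ⟨Bowtie d, inferInstance, inferInstance⟩

/-!
A finite group is built from its composition factors, because `G` embeds in the block product of a
normal subgroup `N` and `G ⧸ N`.  If a finite monoid `M` is not a group, choose a maximal
submonoid `N` containing the units of `M`, and `c ∉ N`.  As `N` and `c` generate `M`, every element
of `M` is either in `N` or of the form `u * (c * x₁ * c * ⋯ * xₖ * c) * v` with `u, v, xᵢ ∈ N`.
The middle factor lies in `c * M ∩ M * c`, which is a monoid under `(x * c) ∘ (c * y) = x * c * y`,
the local divisor of `M` at `c`; it divides `M` and, `c` not being a unit, has fewer elements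
than `M`.  The triples `(u, z, v)` form a Rees matrix semigroup over the local divisor.  With `N`
adjoined, it embeds in an iterated block product built from `N`, the local divisor and a two-element
semilattice, and induction on the number of elements of `M` applies.
-/

/-! ### Division -/

namespace Divides

variable {X Y Z : Type} [Mul X] [Mul Y] [Mul Z]

theorem of_injective_of_surjective (i : Y →ₙ* Z) (hi : Function.Injective i)
    (f : Y →ₙ* X) (hf : Function.Surjective f) : Divides X Z := by
  let e : Y ≃* i.srange := MulEquiv.ofBijective i.srangeRestrict
    ⟨fun _ _ h => hi (congrArg Subtype.val h), i.srangeRestrict_surjective⟩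
  exact ⟨i.srange, f.comp e.symm.toMulHom, hf.comp e.symm.surjective⟩

theorem of_injective (f : X →ₙ* Y) (hf : Function.Injective f) : Divides X Y :=
  of_injective_of_surjective f hf (MulHom.id X) Function.surjective_id

theorem of_surjective (f : Y →ₙ* X) (hf : Function.Surjective f) : Divides X Y :=
  of_injective_of_surjective (MulHom.id Y) Function.injective_id f hf

theorem trans (hXY : Divides X Y) (hYZ : Divides Y Z) : Divides X Z := by
  obtain ⟨U, f, hf⟩ := hXY
  obtain ⟨V, g, hg⟩ := hYZ
  have hgU : Function.Surjective (g.subsemigroupComap U) := fun u =>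
    let ⟨v, hv⟩ := hg u
    ⟨⟨v, by simp [hv]⟩, Subtype.ext hv⟩
  exact of_injective_of_surjective
    ((MulMemClass.subtype V).comp (MulMemClass.subtype (U.comap g)))
    (Subtype.val_injective.comp Subtype.val_injective) (f.comp (g.subsemigroupComap U))
    (hf.comp hgU)

theorem of_withOne {G : Type} [Group G] [Nontrivial G] (h : Divides G (WithOne X)) :
    Divides G X := by
  obtain ⟨U, f, hf⟩ := h
  let f' : U.comap WithOne.coeMulHom →ₙ* G := f.comp (WithOne.coeMulHom.subsemigroupComap U)
  have mem_range_of_ne_one {g : G} (hg : g ≠ 1) : g ∈ f'.srange := by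
    obtain ⟨⟨x, hx⟩, rfl⟩ := hf g
    induction x using WithOne.recOneCoe with
    | one => exact absurd (mul_eq_left.1 (map_mul f ⟨1, hx⟩ ⟨1, hx⟩).symm) hg
    | coe x => exact ⟨⟨x, hx⟩, rfl⟩
  refine ⟨_, f', fun g => ?_⟩
  obtain rfl | hg := eq_or_ne g 1
  · obtain ⟨k, hk⟩ := exists_ne (1 : G)
    rw [← MulHom.mem_srange, ← mul_inv_cancel k]
    exact mul_mem (mem_range_of_ne_one hk) (mem_range_of_ne_one (inv_ne_one.2 hk))
  · exact mem_range_of_ne_one hg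

end Divides

/-! ### Block products -/

attribute [ext] Bowtie

/-- The actions of `T` by translation on functions `T × T → V`.  When `V` and `T` are monoids,
`Bowtie (blockProduct V T)` is the Rhodes–Tilson block product of `V` and `T`. -/
def blockProduct (V T : Type) [Semigroup V] [Semigroup T] : BowtieData (T × T → V) T where
  lact t f := fun p => f (p.1 * t, p.2)
  ract f t := fun p => f (p.1, t * p.2)
  lact_mul _ _ _ := rfl
  mul_ract _ _ _ := rfl
  mul_lact t t' f := by simp only [mul_assoc]
  ract_mul f t t' := by simp only [mul_assoc]
  lact_ract _ _ _ := rfl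

namespace blockProduct

variable {V T : Type} [Semigroup V] [Semigroup T]

@[simp]
theorem mul_fst (a b : Bowtie (blockProduct V T)) (p : T × T) :
    (a * b).fst p = a.fst (p.1, b.snd * p.2) * b.fst (p.1 * a.snd, p.2) := rfl

@[simp]
theorem mul_snd (a b : Bowtie (blockProduct V T)) : (a * b).snd = a.snd * b.snd := rfl

end blockProduct

-- The Kaloujnine–Krasner embedding, with `Quotient.out` as the transversal.
theorem divides_blockProduct_quotient {G : Type} [Group G] (N : Subgroup G) [N.Normal] :
    Divides G (Bowtie (blockProduct N (G ⧸ N))) := by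
  let cocycle (g : G) (p : (G ⧸ N) × (G ⧸ N)) : N :=
    ⟨p.1.out * g * (p.1 * g).out⁻¹, by rw [← QuotientGroup.eq_one_iff]; simp⟩
  let f : G →ₙ* Bowtie (blockProduct N (G ⧸ N)) :=
    { toFun g := ⟨cocycle g, g⟩
      map_mul' x y := by ext <;> simp [cocycle, mul_assoc] }
  refine Divides.of_injective f fun x y hxy => ?_
  have hsnd : (x : G ⧸ N) = y := congrArg Bowtie.snd hxy
  have hfst : cocycle x (1, 1) = cocycle y (1, 1) := congrFun (congrArg Bowtie.fst hxy) (1, 1)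
  simpa [cocycle, hsnd] using hfst

/-! ### Rees matrix semigroups with an adjoined base -/

/-- The disjoint union of a semigroup `N` and the Rees matrix semigroup `N × Q × N` over `Q` with
sandwich matrix `(v, u) ↦ P (v * u)`, on which `N` acts by multiplying the adjacent outer
coordinate. -/
inductive ReesExtension {N Q : Type} (P : N → Q) : Type where
  | base (n : N) : ReesExtension P
  | triple (u : N) (z : Q) (v : N) : ReesExtension P

namespace ReesExtension

section Mul

variable {N Q : Type} [Mul N] [Mul Q] {P : N → Q}

instance : Mul (ReesExtension P) where
  mul
    | base n, base n' => base (n * n')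
    | base n, triple u z v => triple (n * u) z v
    | triple u z v, base n => triple u z (v * n)
    | triple u z v, triple u' z' v' => triple u (z * P (v * u') * z') v'

@[simp]
theorem base_mul_base (n n' : N) : (base n * base n' : ReesExtension P) = base (n * n') := rfl

@[simp]
theorem base_mul_triple (n u v : N) (z : Q) :
    (base n * triple u z v : ReesExtension P) = triple (n * u) z v := rfl

@[simp]
theorem triple_mul_base (u v n : N) (z : Q) :
    (triple u z v * base n : ReesExtension P) = triple u z (v * n) := rfl

@[simp]
theorem triple_mul_triple (u v u' v' : N) (z z' : Q) :
    (triple u z v * triple u' z' v' : ReesExtension P) =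
      triple u (z * P (v * u') * z') v' := rfl

end Mul

instance {N Q : Type} [Semigroup N] [Semigroup Q] (P : N → Q) : Semigroup (ReesExtension P) where
  mul_assoc x y w := by
    cases x <;> cases y <;> cases w <;> simp [mul_assoc]

instance {N Q : Type} [Finite N] [Finite Q] (P : N → Q) : Finite (ReesExtension P) :=
  Finite.of_surjective (Sum.elim base fun t : N × Q × N => triple t.1 t.2.1 t.2.2) fun
    | base n => ⟨.inl n, rfl⟩
    | triple u z v => ⟨.inr (u, z, v), rfl⟩

/-- The Rees extension over the trivial semigroup, in which triples retain only their outer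
coordinates. -/
abbrev Ends (N : Type) : Type := ReesExtension fun _ : N => ()

/-- The middle coordinate `z` of `triple u z v` after multiplication on the left by an element
with given ends, the middle coordinate of that element being ignored. -/
def middleAfter {N Q : Type} [Mul N] [Mul Q] (P : N → Q) (u : N) (z : Q) : Ends N → Q
  | base _ => z
  | triple _ _ v => P (v * u) * z

theorem divides_blockProduct_ends {N Q : Type} [Semigroup N] [Nonempty N] [Monoid Q] (P : N → Q) :
    Divides (ReesExtension P) (Bowtie (blockProduct Q (Ends N))) := by
  let f : ReesExtension P →ₙ* Bowtie (blockProduct Q (Ends N)) :=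
    { toFun
        | base n => ⟨1, base n⟩
        | triple u z v => ⟨fun p => middleAfter P u z p.1, triple u () v⟩
      map_mul' := by
        rintro (n | ⟨u, z, v⟩) (n' | ⟨u', z', v'⟩) <;> ext ⟨p | p, q⟩ <;>
          simp [middleAfter, mul_assoc] }
  refine Divides.of_injective f ?_
  rintro (n | ⟨u, z, v⟩) (n' | ⟨u', z', v'⟩) h <;>
    obtain ⟨hfst, hsnd⟩ := Bowtie.mk.inj h
  · cases hsnd; rfl
  · cases hsnd
  · cases hsnd
  · obtain ⟨n⟩ := ‹Nonempty N›
    have hz : z = z' := congrFun hfst (base n, base n)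
    cases hsnd
    rw [hz]

-- Triples have second coordinate `0`, so a context equal to `1` contains no triple: in a product,
-- only the factors contributing to the outer coordinate on that side are left unmasked.
theorem ends_divides_blockProduct {N E : Type} [Monoid N] [MonoidWithZero E] [Nontrivial E] :
    Divides (Ends N) (Bowtie (blockProduct (N × N) E)) := by
  classical
  let mask (e : E) (n : N) : N := if e = 1 then n else 1
  let f : Ends N →ₙ* Bowtie (blockProduct (N × N) E) :=
    { toFun
        | base n => ⟨fun p => (mask p.1 n, mask p.2 n), 1⟩
        | triple u _ v => ⟨fun p => (mask p.1 u, mask p.2 v), 0⟩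
      map_mul' := by
        rintro (n | ⟨u, z, v⟩) (n' | ⟨u', z', v'⟩) <;> ext ⟨p, q⟩ <;>
          simp [mask] <;> split_ifs <;> simp }
  refine Divides.of_injective f ?_
  rintro (n | ⟨u, z, v⟩) (n' | ⟨u', z', v'⟩) h <;>
    obtain ⟨hfst, hsnd⟩ := Bowtie.mk.inj h <;>
    have h11 := congrFun hfst (1, 1) <;>
    simp_all [mask]

end ReesExtension

/-! ### Local divisors -/

section LocalDivisor

variable {M : Type} [Monoid M]

/-- The submonoid of those `x` with `c * x ∈ M * c`, of which the local divisor is a quotient. -/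
def localSubmonoid (c : M) : Submonoid M where
  carrier := {x | ∃ y, c * x = y * c}
  one_mem' := ⟨1, by simp⟩
  mul_mem' := by
    rintro a b ⟨x, hx⟩ ⟨y, hy⟩
    exact ⟨x * y, by rw [← mul_assoc, hx, mul_assoc, hy, mul_assoc]⟩

/-- The congruence `c * x = c * y` on `localSubmonoid c`. -/
def localCon (c : M) : Con (localSubmonoid c) where
  r x y := c * (x : M) = c * y
  iseqv := ⟨fun _ => rfl, Eq.symm, Eq.trans⟩
  mul' := by
    rintro w x y z hwx hyz
    obtain ⟨t, ht⟩ := x.2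
    calc c * ((w : M) * y) = t * (c * y) := by rw [← mul_assoc, hwx, ht, mul_assoc]
      _ = c * ((x : M) * z) := by rw [hyz, ← mul_assoc, ← ht, mul_assoc]

/-- The local divisor of `M` at `c`.  It is usually defined as the set `c * M ∩ M * c` with the
product `(x * c) ∘ (c * y) = x * c * y`, with which `LocalDivisor.val` identifies it. -/
abbrev LocalDivisor (c : M) : Type := (localCon c).Quotient

namespace LocalDivisor

variable {c : M}

/-- The map from the local divisor onto `c * M ∩ M * c`. -/
def val : LocalDivisor c → M :=
  Quotient.lift (fun x : localSubmonoid c => c * (x : M)) fun _ _ h => h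

@[simp]
theorem val_coe (x : localSubmonoid c) : val (x : LocalDivisor c) = c * x := rfl

theorem val_injective : Function.Injective (val : LocalDivisor c → M) := by
  intro x y h
  induction x, y using Con.induction_on₂ with
  | _ x y => exact (Con.eq _).2 h

@[simp]
theorem val_one : val (1 : LocalDivisor c) = c := mul_one c

/-- The element of the local divisor corresponding to `c * n * c`. -/
def sandwich (c n : M) : LocalDivisor c :=
  ((⟨n * c, c * n, by rw [mul_assoc]⟩ : localSubmonoid c) : LocalDivisor c)

theorem val_mul_sandwich_mul (z z' : LocalDivisor c) (n : M) :
    val (z * sandwich c n * z') = val z * n * val z' := by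
  induction z, z' using Con.induction_on₂ with
  | _ x y => simp only [sandwich, ← Con.coe_mul, val_coe, Submonoid.coe_mul, mul_assoc]

instance [Finite M] (c : M) : Finite (LocalDivisor c) :=
  Finite.of_injective val val_injective

theorem card_lt [Finite M] (hc : ¬ IsUnit c) : Nat.card (LocalDivisor c) < Nat.card M := by
  by_contra! hcard
  obtain ⟨z, hz⟩ := (val_injective.bijective_of_nat_card_le hcard).surjective 1
  induction z using Con.induction_on with
  | _ x => exact hc (IsUnit.of_mul_eq_one _ hz)

theorem divides (c : M) : Divides (LocalDivisor c) M :=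
  Divides.of_injective_of_surjective (localSubmonoid c).subtype.toMulHom Subtype.val_injective
    (localCon c).mk'.toMulHom Con.mk'_surjective

theorem divides_reesExtension {N : Submonoid M} (hN : N ⊔ Submonoid.powers c = ⊤) :
    Divides M (ReesExtension fun n : N => sandwich c n) := by
  let f : ReesExtension (fun n : N => sandwich c n) →ₙ* M :=
    { toFun
        | .base n => n
        | .triple u z v => u * val z * v
      map_mul' := by
        rintro (n | ⟨u, z, v⟩) (n' | ⟨u', z', v'⟩) <;>
          simp [val_mul_sandwich_mul, ← mul_assoc] }
  let K : Submonoid M := { f.srange with one_mem' := ⟨.base 1, rfl⟩ }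
  have hNK : N ≤ K := fun n hn => ⟨.base ⟨n, hn⟩, rfl⟩
  have hcK : c ∈ K := ⟨.triple 1 1 1, by simp [f]⟩
  have hK : K = ⊤ := top_le_iff.1 (hN ▸ sup_le hNK (Submonoid.powers_le.2 hcK))
  exact Divides.of_surjective f fun m => (hK ▸ Submonoid.mem_top m : m ∈ K)

end LocalDivisor

end LocalDivisor

/-! ### The Krohn–Rhodes class -/

/-- Membership of a finite semigroup `T` in the class `KRClass S`, the analogue of `MemSL`. -/
def MemKR (S : Type) [Semigroup S] [Finite S] (T : Type) [Semigroup T] [Finite T] : Prop :=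
  KRClass S ⟨T, inferInstance, inferInstance⟩

/-- Every finite simple group dividing `M` belongs to `KRClass S`. -/
def SimpleDivisorsMemKR (S : Type) [Semigroup S] [Finite S] (M : Type) [Mul M] : Prop :=
  ∀ (G : Type) [Group G] [Finite G], IsSimpleGroup G → Divides G M → MemKR S G

variable {S : Type} [Semigroup S] [Finite S]

theorem SimpleDivisorsMemKR.of_divides {U V : Type} [Mul U] [Mul V]
    (hV : SimpleDivisorsMemKR S V) (h : Divides U V) : SimpleDivisorsMemKR S U :=
  fun G _ _ hG hGU => hV G hG (hGU.trans h)

namespace MemKR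

section Closure

variable {U V : Type} [Semigroup U] [Finite U] [Semigroup V] [Finite V]

theorem of_divides (hV : MemKR S V) (h : Divides U V) : MemKR S U :=
  KRClass.of_divides ⟨U, inferInstance, inferInstance⟩ ⟨V, inferInstance, inferInstance⟩ h hV

theorem of_isSemilattice (h : IsSemilattice V) : MemKR S V :=
  KRClass.semilattice _ h

theorem of_subsingleton [Subsingleton V] : MemKR S V :=
  of_isSemilattice ⟨fun _ _ => Subsingleton.elim _ _, fun _ => Subsingleton.elim _ _⟩

theorem prod (hU : MemKR S U) (hV : MemKR S V) : MemKR S (U × V) :=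
  KRClass.prod _ _ hU hV

theorem pi (hV : MemKR S V) (I : Type) [Finite I] : MemKR S (I → V) := by
  refine Finite.induction_empty_option (P := fun I => ∀ [Finite I], MemKR S (I → V)) ?_ ?_ ?_ I
  · intro I J e hI _
    have := Finite.of_equiv J e.symm
    let f : (J → V) ≃* (I → V) := MulEquiv.arrowCongr e.symm (MulEquiv.refl V)
    exact hI.of_divides (.of_injective f.toMulHom f.injective)
  · exact of_subsingleton
  · intro I _ hI _
    let f : (Option I → V) →ₙ* V × (I → V) :=
      { toFun g := (g none, fun i => g (some i))
        map_mul' _ _ := rfl }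
    refine (hV.prod hI).of_divides (.of_injective f fun g g' h => ?_)
    obtain ⟨hnone, hsome⟩ := Prod.ext_iff.1 h
    exact funext (Option.forall.2 ⟨hnone, congrFun hsome⟩)

theorem blockProduct (hU : MemKR S U) (hV : MemKR S V) :
    MemKR S (Bowtie (blockProduct U V)) :=
  KRClass.bowtie ⟨V × V → U, inferInstance, inferInstance⟩ ⟨V, inferInstance, inferInstance⟩ _
    (hU.pi _) hV

end Closure

theorem ends {N : Type} [Monoid N] [Finite N] (hN : MemKR S N) :
    MemKR S (ReesExtension.Ends N) := by
  have hE : MemKR S (ZMod 2) := of_isSemilattice ⟨mul_comm, by decide⟩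
  exact ((hN.prod hN).blockProduct hE).of_divides ReesExtension.ends_divides_blockProduct

theorem reesExtension {N Q : Type} [Monoid N] [Finite N] [Monoid Q] [Finite Q]
    (hN : MemKR S N) (hQ : MemKR S Q) (P : N → Q) : MemKR S (ReesExtension P) :=
  (hQ.blockProduct hN.ends).of_divides (ReesExtension.divides_blockProduct_ends P)

theorem of_localDivisor {M : Type} [Monoid M] [Finite M] {N : Submonoid M} {c : M}
    (hNc : N ⊔ Submonoid.powers c = ⊤) (hN : MemKR S N) (hc : MemKR S (LocalDivisor c)) :
    MemKR S M :=
  (hN.reesExtension hc _).of_divides (LocalDivisor.divides_reesExtension hNc)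

theorem of_quotient {G : Type} [Group G] [Finite G] (N : Subgroup G) [N.Normal]
    (hN : MemKR S N) (hQ : MemKR S (G ⧸ N)) : MemKR S G :=
  (hN.blockProduct hQ).of_divides (divides_blockProduct_quotient N)

theorem of_group {G : Type} [Group G] [Finite G] (hG : SimpleDivisorsMemKR S G) :
    MemKR S G := by
  induction hn : Nat.card G using Nat.strong_induction_on generalizing G with
  | _ n ih =>
    subst hn
    cases subsingleton_or_nontrivial G
    · exact of_subsingleton
    by_cases hsimple : IsSimpleGroup G
    · exact hG G hsimple (.of_injective (MulHom.id G) Function.injective_id)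
    obtain ⟨N, hN, hbot, htop⟩ : ∃ N : Subgroup G, N.Normal ∧ N ≠ ⊥ ∧ N ≠ ⊤ := by
      simpa [isSimpleGroup_iff, not_or, ‹Nontrivial G›] using hsimple
    have hNcard : Nat.card N < Nat.card G := by
      obtain ⟨g, hg⟩ := SetLike.exists_not_mem_of_ne_top N htop
      exact Finite.card_subtype_lt hg
    have hQcard : Nat.card (G ⧸ N) < Nat.card G := by
      rw [N.card_eq_card_quotient_mul_card_subgroup]
      exact lt_mul_of_one_lt_right Nat.card_pos (N.one_lt_card_iff_ne_bot.2 hbot)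
    refine of_quotient N (ih _ hNcard (hG.of_divides ?_) rfl) (ih _ hQcard (hG.of_divides ?_) rfl)
    · exact .of_injective N.subtype.toMulHom N.subtype_injective
    · exact .of_surjective (QuotientGroup.mk' N).toMulHom (QuotientGroup.mk'_surjective N)

theorem of_monoid {M : Type} [Monoid M] [Finite M] (hM : SimpleDivisorsMemKR S M) :
    MemKR S M := by
  induction hn : Nat.card M using Nat.strong_induction_on generalizing M with
  | _ n ih =>
    subst hn
    obtain htop | ⟨N, hN, hunits⟩ := eq_top_or_exists_le_coatom (IsUnit.submonoid M)
    · let _ : Group M := groupOfIsUnit ((Submonoid.eq_top_iff' _).1 htop)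
      exact of_group hM
    obtain ⟨c, hcN⟩ : ∃ c, c ∉ N := SetLike.exists_not_mem_of_ne_top N hN.1
    have hNc : N ⊔ Submonoid.powers c = ⊤ :=
      hN.2 _ (left_lt_sup.2 fun h => hcN (Submonoid.powers_le.1 h))
    have hNcard : Nat.card N < Nat.card M := Finite.card_subtype_lt hcN
    have hLcard := LocalDivisor.card_lt fun hc : IsUnit c => hcN (hunits hc)
    refine of_localDivisor hNc (ih _ hNcard (hM.of_divides ?_) rfl)
      (ih _ hLcard (hM.of_divides (LocalDivisor.divides c)) rfl)
    exact .of_injective N.subtype.toMulHom N.subtype_injective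

end MemKR

/-- two-sided Krohn–Rhodes theorem.  Every finite semigroup `S`
belongs to the smallest class of finite semigroups which contains the finite
semilattices and the finite simple groups dividing `S` and which is closed under
division, finite direct products and two-sided semidirect products. -/
theorem two_sided_krohn_rhodes (S : Type) [Semigroup S] [Finite S] :
    KRClass S ⟨S, inferInstance, inferInstance⟩ := by
  have : Finite (WithOne S) := inferInstanceAs (Finite (Option S))
  have hsimple : SimpleDivisorsMemKR S (WithOne S) := fun G _ _ hG hdvd =>
    have := hG.toNontrivial
    KRClass.simpleGroup G hG hdvd.of_withOne
  exact (MemKR.of_monoid hsimple).of_divides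
    (Divides.of_injective WithOne.coeMulHom WithOne.coe_injective)
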